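/- arXiv:1904.10755 — 5 statements merged into one kernel-verified Lean document; each statement's English description precedes it below -/
import Mathlib

section
/- Let T > 0, c ≤ 0, and let f : [0,T] → ℝ be continuous and nonnegative. Let U : [0,T] → ℝ be twice continuously differentiable with U(0) = 0 and U′(0) = 0, and suppose U″(t) ≤ c·U′(t) + f(t) for all t ∈ [0,T]. Then U(t) ≤ ∫₀ᵗ (t−s)·f(s) ds for all t ∈ [0,T]. -/
/-!
With `F t = ∫₀ᵗ f`, the function `t ↦ exp (-c t) (U' t - F t)` has derivative at most
`exp (-c t) * c * F t ≤ 0`, because `c ≤ 0 ≤ F`; it vanishes at `0`, hence `U' ≤ F` on `[0, T]`.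
Since `G t = ∫₀ᵗ (t - s) f s ds = t * F t - ∫₀ᵗ s f s ds` has derivative `F`, the function `U - G`
is antitone and vanishes at `0`, so `U ≤ G`.

The function `f` is only controlled on `[0, T]`, so it is replaced by the extension that is constant
outside this interval; this makes the primitives differentiable everywhere, endpoints included.
-/

open Real Set intervalIntegral

/-- A function vanishing at `0` whose derivative is nonpositive on `[0, T]` is nonpositive there. -/
lemma nonpos_of_hasDerivAt_nonpos {T : ℝ} {W W' : ℝ → ℝ}
    (hW : ∀ t ∈ Set.Icc (0:ℝ) T, HasDerivAt W (W' t) t)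
    (hW' : ∀ t ∈ Set.Icc (0:ℝ) T, W' t ≤ 0) (h0 : W 0 = 0) :
    ∀ t ∈ Set.Icc (0:ℝ) T, W t ≤ 0 := by
  intro t ht
  have hanti : AntitoneOn W (Set.Icc 0 T) :=
    antitoneOn_of_hasDerivWithinAt_nonpos (f' := W') (convex_Icc 0 T)
      (fun x hx => (hW x hx).continuousAt.continuousWithinAt)
      (fun x hx => (hW x (interior_subset hx)).hasDerivWithinAt)
      (fun x hx => hW' x (interior_subset hx))
  exact h0 ▸ hanti ⟨le_rfl, ht.1.trans ht.2⟩ ht ht.1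

/-- Second-order differential comparison: if `U'' ≤ c U' + f` on `[0, T]` with `c ≤ 0` and
`U(0) = U'(0) = 0`, then `U(t) ≤ ∫₀ᵗ (t - s) f(s) ds`. -/
theorem second_order_comparison
    (T c : ℝ) (hT : 0 < T) (hc : c ≤ 0)
    (f U U' U'' : ℝ → ℝ)
    (hf_cont : ContinuousOn f (Set.Icc 0 T))
    (hf_nonneg : ∀ t ∈ Set.Icc (0:ℝ) T, 0 ≤ f t)
    (hU : ∀ t ∈ Set.Icc (0:ℝ) T, HasDerivAt U (U' t) t)
    (hU' : ∀ t ∈ Set.Icc (0:ℝ) T, HasDerivAt U' (U'' t) t)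
    (hU''_cont : ContinuousOn U'' (Set.Icc 0 T))
    (hU0 : U 0 = 0) (hU'0 : U' 0 = 0)
    (hineq : ∀ t ∈ Set.Icc (0:ℝ) T, U'' t ≤ c * U' t + f t) :
    ∀ t ∈ Set.Icc (0:ℝ) T, U t ≤ ∫ s in (0:ℝ)..t, (t - s) * f s := by
  obtain ⟨g, hg, hgf⟩ : ∃ g : ℝ → ℝ, Continuous g ∧ ∀ t ∈ Set.Icc (0:ℝ) T, g t = f t :=
    ⟨Set.IccExtend hT.le ((Set.Icc 0 T).domRestrict f), hf_cont.domRestrict.Icc_extend',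
      fun t ht => Set.IccExtend_of_mem hT.le _ ht⟩
  have hF : ∀ t, HasDerivAt (fun t => ∫ s in (0:ℝ)..t, g s) (g t) t :=
    fun t => hg.integral_hasStrictDerivAt 0 t |>.hasDerivAt
  have hsg : Continuous fun s => s * g s := continuous_id.mul hg
  have hH : ∀ t, HasDerivAt (fun t => ∫ s in (0:ℝ)..t, s * g s) (t * g t) t :=
    fun t => hsg.integral_hasStrictDerivAt 0 t |>.hasDerivAt
  have hF_nonneg : ∀ t ∈ Set.Icc (0:ℝ) T, 0 ≤ ∫ s in (0:ℝ)..t, g s := by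
    intro t ht
    refine intervalIntegral.integral_nonneg ht.1 fun s hs => ?_
    have hs' : s ∈ Set.Icc (0:ℝ) T := ⟨hs.1, hs.2.trans ht.2⟩
    exact (hgf s hs').symm ▸ hf_nonneg s hs'
  have hU'F : ∀ t ∈ Set.Icc (0:ℝ) T, U' t ≤ ∫ s in (0:ℝ)..t, g s := by
    intro t ht
    have h := nonpos_of_hasDerivAt_nonpos
      (W := fun t => Real.exp (-c * t) * (U' t - ∫ s in (0:ℝ)..t, g s))
      (fun t ht => (((hasDerivAt_id t).const_mul (-c)).exp).mul ((hU' t ht).sub (hF t)))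
      (fun t ht => ?_) (by simp [hU'0]) t ht
    · have := nonpos_of_mul_nonpos_right h (Real.exp_pos _)
      linarith
    · have h1 := hineq t ht
      have h2 := mul_nonpos_of_nonpos_of_nonneg hc (hF_nonneg t ht)
      rw [← hgf t ht] at h1
      have h3 : U'' t - g t - c * (U' t - ∫ s in (0:ℝ)..t, g s) ≤ 0 := by linarith
      have h4 := mul_nonpos_of_nonneg_of_nonpos (Real.exp_pos (-c * t)).le h3
      simp only [id]
      linarith
  intro t ht
  have hG : (∫ s in (0:ℝ)..t, (t - s) * f s)
      = t * (∫ s in (0:ℝ)..t, g s) - ∫ s in (0:ℝ)..t, s * g s := by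
    rw [← intervalIntegral.integral_const_mul, ← intervalIntegral.integral_sub
      ((hg.intervalIntegrable _ _).const_mul t) (hsg.intervalIntegrable _ _)]
    refine intervalIntegral.integral_congr fun s hs => ?_
    rw [Set.uIcc_of_le ht.1] at hs
    simp only [hgf s ⟨hs.1, hs.2.trans ht.2⟩]
    ring
  have h := nonpos_of_hasDerivAt_nonpos
    (W := fun t => U t - (t * (∫ s in (0:ℝ)..t, g s) - ∫ s in (0:ℝ)..t, s * g s))
    (fun t ht => (hU t ht).sub (((hasDerivAt_id t).mul (hF t)).sub (hH t)))
    (fun t ht => by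
      have := hU'F t ht
      simp only [id]
      linarith) (by simp [hU0]) t ht
  rw [hG]
  linarith
end

section
/- Let T > 0 and a, b > 0. Let u : [0,T] → ℝ be continuous and nonnegative, and let f : [0,T] → ℝ be continuous and nonnegative. If u(t) ≤ f(t) + a·∫₀ᵗ u(s) ds + b·∫₀ᵗ (t−s)·u(s) ds for all t ∈ [0,T], then for all t ∈ [0,T] one has ∫₀ᵗ (t−s)·u(s) ds ≤ exp(((a + √(a² + 4b))/2)·t) · ∫₀ᵗ (t−s)·f(s) ds. -/
/-!
Write `w t = ∫₀ᵗ (t - s) u s ds`, so `w' = ∫₀ᵗ u`, `w'' = u`, and the hypothesis reads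
`w'' ≤ f + a w' + b w`. With `p = (a + √(a² + 4b)) / 2` and `q = p - a`, one has `p q = b`, so the
differential operator factors: `v = w' + q w` satisfies `v' - p v ≤ f`. Hence
`(e^{-pt} v)' ≤ e^{-pt} f ≤ f`, which integrates to `v ≤ e^{pt} F` with `F t = ∫₀ᵗ f`. As `q w ≥ 0`,
also `w' ≤ e^{pt} F`. Finally, for `G t = ∫₀ᵗ (t - s) f s ds`, where `G' = F`, the difference
`e^{pt} G - w` has derivative at least `p e^{pt} G ≥ 0` and vanishes at `0`.

Functions continuous only on `[0, T]` are first replaced by their continuous constant extensions,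
which changes none of the integrals.
-/

open Real Set intervalIntegral

lemma hasDerivAt_kernel_integral {u : ℝ → ℝ} (hu : Continuous u) (t : ℝ) :
    HasDerivAt (fun t => ∫ s in (0:ℝ)..t, (t - s) * u s) (∫ s in (0:ℝ)..t, u s) t := by
  -- Pulling `t` out of the integral leaves only integrals with a fixed integrand to differentiate.
  have h : (fun t => ∫ s in (0:ℝ)..t, (t - s) * u s) =
      fun t => t * (∫ s in (0:ℝ)..t, u s) - ∫ s in (0:ℝ)..t, s * u s := by
    funext t
    rw [← integral_const_mul, ← integral_sub]
    · simp only [sub_mul]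
    · exact (by fun_prop : Continuous fun s => t * u s).intervalIntegrable _ _
    · exact (by fun_prop : Continuous fun s => s * u s).intervalIntegrable _ _
  rw [h]
  have h1 := hu.integral_hasStrictDerivAt 0 t |>.hasDerivAt
  have h2 := (by fun_prop : Continuous fun s => s * u s).integral_hasStrictDerivAt 0 t
    |>.hasDerivAt
  exact (((hasDerivAt_id t).mul h1).sub h2).congr_deriv (by simp)

lemma nonneg_of_hasDerivAt_nonneg {T : ℝ} {g g' : ℝ → ℝ} (hg : ∀ t, HasDerivAt g (g' t) t)
    (h0 : g 0 = 0) (h : ∀ t ∈ Icc (0:ℝ) T, 0 ≤ g' t) : ∀ t ∈ Icc (0:ℝ) T, 0 ≤ g t := by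
  intro t ht
  have hmono : MonotoneOn g (Icc 0 T) := by
    refine monotoneOn_of_deriv_nonneg (convex_Icc 0 T)
      (fun x _ => (hg x).continuousAt.continuousWithinAt)
      (fun x _ => (hg x).differentiableAt.differentiableWithinAt) fun x hx => ?_
    rw [(hg x).deriv]
    exact h x (interior_subset hx)
  simpa [h0] using hmono ⟨le_rfl, ht.1.trans ht.2⟩ ht ht.1

/-- The bound for globally continuous functions, with the quadratic given by its roots `p`, `-q`. -/
lemma kernel_integral_bound_of_continuous {T p q : ℝ} (hp : 0 ≤ p) (hq : 0 ≤ q) {u f : ℝ → ℝ}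
    (hu : Continuous u) (hf : Continuous f)
    (hu0 : ∀ t ∈ Icc (0:ℝ) T, 0 ≤ u t) (hf0 : ∀ t ∈ Icc (0:ℝ) T, 0 ≤ f t)
    (hineq : ∀ t ∈ Icc (0:ℝ) T, u t ≤ f t + (p - q) * (∫ s in (0:ℝ)..t, u s) +
      p * q * ∫ s in (0:ℝ)..t, (t - s) * u s) :
    ∀ t ∈ Icc (0:ℝ) T, (∫ s in (0:ℝ)..t, (t - s) * u s) ≤
      exp (p * t) * ∫ s in (0:ℝ)..t, (t - s) * f s := by
  have dU := fun t => (hu.integral_hasStrictDerivAt 0 t).hasDerivAt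
  have dF := fun t => (hf.integral_hasStrictDerivAt 0 t).hasDerivAt
  have dw := hasDerivAt_kernel_integral hu
  have dG := hasDerivAt_kernel_integral hf
  have kernel_nonneg : ∀ g : ℝ → ℝ, (∀ t ∈ Icc (0:ℝ) T, 0 ≤ g t) →
      ∀ t ∈ Icc (0:ℝ) T, 0 ≤ ∫ s in (0:ℝ)..t, (t - s) * g s := fun g hg t ht =>
    integral_nonneg ht.1 fun s hs =>
      mul_nonneg (sub_nonneg.2 hs.2) (hg s ⟨hs.1, hs.2.trans ht.2⟩)
  have hw0 := kernel_nonneg u hu0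
  have hG0 := kernel_nonneg f hf0
  have w_zero : (∫ s in (0:ℝ)..0, (0 - s) * u s) = 0 := integral_same
  have G_zero : (∫ s in (0:ℝ)..0, (0 - s) * f s) = 0 := integral_same
  set U : ℝ → ℝ := fun t => ∫ s in (0:ℝ)..t, u s with hU
  set F : ℝ → ℝ := fun t => ∫ s in (0:ℝ)..t, f s with hF
  set w : ℝ → ℝ := fun t => ∫ s in (0:ℝ)..t, (t - s) * u s with hw
  set G : ℝ → ℝ := fun t => ∫ s in (0:ℝ)..t, (t - s) * f s with hG
  change ∀ t ∈ Icc (0:ℝ) T, u t ≤ f t + (p - q) * U t + p * q * w t at hineq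
  change ∀ t ∈ Icc (0:ℝ) T, 0 ≤ w t at hw0
  change ∀ t ∈ Icc (0:ℝ) T, 0 ≤ G t at hG0
  change ∀ t, HasDerivAt w (U t) t at dw
  change ∀ t, HasDerivAt G (F t) t at dG
  change w 0 = 0 at w_zero
  change G 0 = 0 at G_zero
  change ∀ t ∈ Icc (0:ℝ) T, w t ≤ exp (p * t) * G t
  have U_zero : U 0 = 0 := integral_same
  have F_zero : F 0 = 0 := integral_same
  have dE : ∀ c t : ℝ, HasDerivAt (fun t => exp (c * t)) (exp (c * t) * c) t := fun c t => by
    simpa using ((hasDerivAt_id t).const_mul c).exp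
  have first_order : ∀ t ∈ Icc (0:ℝ) T, 0 ≤ F t - exp (-p * t) * (U t + q * w t) := by
    refine nonneg_of_hasDerivAt_nonneg
      (fun t => (dF t).sub ((dE (-p) t).mul ((dU t).add ((dw t).const_mul q))))
      (by simp [U_zero, F_zero, w_zero]) fun t ht => ?_
    have hE : exp (-p * t) ≤ 1 := exp_le_one_iff.2 (by nlinarith [ht.1])
    have h1 := mul_le_mul_of_nonneg_left (hineq t ht) (exp_pos (-p * t)).le
    have h2 := mul_le_mul_of_nonneg_right hE (hf0 t ht)
    linarith
  have deriv_bound : ∀ t ∈ Icc (0:ℝ) T, U t ≤ exp (p * t) * F t := by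
    intro t ht
    have h := mul_nonneg (exp_pos (p * t)).le (first_order t ht)
    rw [mul_sub, ← mul_assoc, ← exp_add, show p * t + -p * t = 0 by ring, exp_zero] at h
    linarith [mul_nonneg hq (hw0 t ht)]
  have final := nonneg_of_hasDerivAt_nonneg (T := T)
    (fun t => ((dE p t).mul (dG t)).sub (dw t)) (by simp [G_zero, w_zero]) fun t ht => by
      have h := mul_nonneg (mul_nonneg (exp_pos (p * t)).le hp) (hG0 t ht)
      linarith [deriv_bound t ht]
  exact fun t ht => sub_nonneg.1 (final t ht)

/-- Memory-kernel Gronwall inequality: bound on the kernel integral `∫₀ᵗ (t-s) u(s) ds`. -/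
theorem gronwall_memory_kernel_integral_bound
    (T a b : ℝ) (hT : 0 < T) (ha : 0 < a) (hb : 0 < b)
    (u f : ℝ → ℝ)
    (hu_cont : ContinuousOn u (Set.Icc 0 T))
    (hu_nonneg : ∀ t ∈ Set.Icc (0:ℝ) T, 0 ≤ u t)
    (hf_cont : ContinuousOn f (Set.Icc 0 T))
    (hf_nonneg : ∀ t ∈ Set.Icc (0:ℝ) T, 0 ≤ f t)
    (hineq : ∀ t ∈ Set.Icc (0:ℝ) T,
      u t ≤ f t + a * (∫ s in (0:ℝ)..t, u s) + b * ∫ s in (0:ℝ)..t, (t - s) * u s) :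
    ∀ t ∈ Set.Icc (0:ℝ) T,
      (∫ s in (0:ℝ)..t, (t - s) * u s) ≤
        Real.exp ((a + Real.sqrt (a ^ 2 + 4 * b)) / 2 * t) *
          ∫ s in (0:ℝ)..t, (t - s) * f s := by
  have ext : ∀ g : ℝ → ℝ, ContinuousOn g (Icc 0 T) →
      ∃ g' : ℝ → ℝ, Continuous g' ∧ EqOn g' g (Icc 0 T) := fun g hg =>
    ⟨IccExtend hT.le ((Icc 0 T).domRestrict g), hg.domRestrict.Icc_extend',
      fun x hx => IccExtend_of_mem hT.le _ hx⟩
  obtain ⟨u', hu', eu⟩ := ext u hu_cont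
  obtain ⟨f', hf', ef⟩ := ext f hf_cont
  have int_eq : ∀ {g g' : ℝ → ℝ}, EqOn g' g (Icc 0 T) → ∀ t ∈ Icc (0:ℝ) T,
      (∫ s in (0:ℝ)..t, g' s) = ∫ s in (0:ℝ)..t, g s := fun h t ht =>
    integral_congr fun s hs => by
      rw [uIcc_of_le ht.1] at hs
      exact h ⟨hs.1, hs.2.trans ht.2⟩
  have kernel_eq : ∀ {g g' : ℝ → ℝ}, EqOn g' g (Icc 0 T) → ∀ t ∈ Icc (0:ℝ) T,
      (∫ s in (0:ℝ)..t, (t - s) * g' s) = ∫ s in (0:ℝ)..t, (t - s) * g s := fun h t ht =>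
    int_eq (fun s hs => congrArg ((t - s) * ·) (h hs)) t ht
  have hsq : √(a ^ 2 + 4 * b) ^ 2 = a ^ 2 + 4 * b := sq_sqrt (by positivity)
  have hle : a ≤ √(a ^ 2 + 4 * b) := le_sqrt_of_sq_le (by linarith)
  intro t ht
  rw [← kernel_eq eu t ht, ← kernel_eq ef t ht]
  refine kernel_integral_bound_of_continuous (q := (√(a ^ 2 + 4 * b) - a) / 2)
    (by positivity) (by linarith) hu' hf' (fun s hs => (eu hs).symm ▸ hu_nonneg s hs)
    (fun s hs => (ef hs).symm ▸ hf_nonneg s hs) (fun s hs => ?_) t ht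
  rw [eu hs, ef hs, int_eq eu s hs, kernel_eq eu s hs]
  convert hineq s hs using 3
  · ring
  · linear_combination hsq / 4
end

section
/- For every integer p ≥ 1, the classical Laguerre polynomial L_p has exactly p roots counted with multiplicity, all of its roots are real, simple, and strictly positive. -/
/-!
The Rodrigues-type identity `(D - 1)^p X^p = p! · L_p`, with `D` the derivative, reduces
real-rootedness of `L_p` to the fact that `f ↦ f' - f` preserves real-rootedness
(`splits_derivative_sub_self`). The latter follows from the partial fraction expansion
`f' / f = ∑ 1 / (z - r)` over the real roots `r` of `f`: off the real axis its imaginary part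
is nonzero, so `f' / f` cannot take the value `1` there.

All roots are positive because the coefficients of `L_p(-x)` are nonnegative and
`L_p(0) = 1`. They are simple because `L_p` solves `X y'' + (1 - X) y' + p y = 0`
(`laguerre_ode`): writing `y = (X - a)^m g` with `m ≥ 2` and `g(a) ≠ 0`, the lowest-order term of
the equation at `a` is `a m (m - 1) g(a)`, which forces `a = 0`.
-/

open Polynomial

/-- The classical Laguerre polynomial `L_p(x) = ∑_{k=0}^p (-1)^k (p choose k) x^k / k!`. -/
noncomputable def laguerre (p : ℕ) : Polynomial ℝ :=
  ∑ k ∈ Finset.range (p + 1),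
    Polynomial.C ((-1 : ℝ) ^ k * (p.choose k : ℝ) / (Nat.factorial k : ℝ)) * Polynomial.X ^ k

/-- Each term `1 / (z - r)` with `r` real has imaginary part `-im z / |z - r|²`, so the sum over
a nonempty multiset of real numbers has imaginary part a negative multiple of `im z`. -/
lemma exists_im_sum_one_div_sub (z : ℂ) (hz : z.im ≠ 0) (s : Multiset ℝ) :
    ∃ S : ℝ, 0 ≤ S ∧ (s ≠ 0 → 0 < S) ∧
      ((s.map fun r : ℝ => 1 / (z - (r : ℂ))).sum).im = -z.im * S := by
  induction s using Multiset.induction_on with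
  | empty => exact ⟨0, by simp⟩
  | cons r s ih =>
    obtain ⟨S, hS, -, him⟩ := ih
    have hpos : 0 < Complex.normSq (z - r) := by
      rw [Complex.normSq_pos]
      intro h
      apply hz
      simpa using congrArg Complex.im h
    refine ⟨1 / Complex.normSq (z - r) + S, by positivity, fun _ => by positivity, ?_⟩
    rw [Multiset.map_cons, Multiset.sum_cons, Complex.add_im, him, one_div, Complex.inv_im]
    simp
    ring

/-- The operator `D - 1` preserves real-rootedness. -/
lemma splits_derivative_sub_self {f : ℝ[X]} (hf : f.Splits) : (derivative f - f).Splits := by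
  rcases eq_or_ne f 0 with rfl | hf0
  · simp
  refine Splits.of_splits_map Complex.ofRealHom (IsAlgClosed.splits _) fun z hz => ?_
  by_cases hzim : z.im = 0
  · exact ⟨z.re, Complex.ext (by simp) (by simp [hzim])⟩
  exfalso
  have hne : (f.map Complex.ofRealHom).eval z ≠ 0 := by
    intro h
    obtain ⟨r, rfl⟩ := hf.mem_range_of_isRoot hf0 (i := Complex.ofRealHom) h
    simp at hzim
  have hroot := isRoot_of_mem_roots hz
  rw [IsRoot, Polynomial.map_sub, ← derivative_map, eval_sub, sub_eq_zero] at hroot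
  have hsum := (hf.map Complex.ofRealHom).eval_derivative_div_eval_of_ne_zero hne
  rw [hroot, div_self hne, hf.roots_map, Multiset.map_map] at hsum
  obtain ⟨S, -, hS, him⟩ := exists_im_sum_one_div_sub z hzim f.roots
  by_cases hs : f.roots = 0
  · simp [hs] at hsum
  · have h1 : (1 : ℂ).im = -z.im * S := by
      rw [hsum, ← him]
      rfl
    have := (hS hs).ne'
    simp [hzim, this] at h1

lemma coeff_laguerre (p n : ℕ) :
    (laguerre p).coeff n = (-1 : ℝ) ^ n * (p.choose n : ℝ) / (n.factorial : ℝ) := by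
  simp only [laguerre, finsetSum_coeff, coeff_C_mul, coeff_X_pow, mul_ite, mul_one, mul_zero,
    Finset.sum_ite_eq, Finset.mem_range]
  split_ifs with h
  · rfl
  · rw [Nat.choose_eq_zero_of_lt (by omega)]
    simp

lemma natDegree_laguerre (p : ℕ) : (laguerre p).natDegree = p := by
  refine natDegree_eq_of_le_of_coeff_ne_zero ?_ ?_
  · rw [natDegree_le_iff_coeff_eq_zero]
    intro n hn
    simp [coeff_laguerre, Nat.choose_eq_zero_of_lt hn]
  · simp [coeff_laguerre, Nat.factorial_ne_zero]

lemma laguerre_ne_zero (p : ℕ) : laguerre p ≠ 0 := by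
  intro h
  have := coeff_laguerre p 0
  simp [h] at this

/-- Rodrigues-type formula `(D - 1)^p X^p = p! L_p`. -/
lemma iterate_derivative_sub_self_X_pow (p : ℕ) :
    (fun f : ℝ[X] => derivative f - f)^[p] (X ^ p) = C (p.factorial : ℝ) * laguerre p := by
  let D : Module.End ℝ ℝ[X] := derivative
  have hfun : (fun f : ℝ[X] => derivative f - f) = ⇑(-1 + D) := by
    funext f
    change _ = -f + derivative f
    ring
  rw [hfun, ← Module.End.pow_apply, (Commute.neg_one_left D).add_pow]
  rw [LinearMap.sum_apply, laguerre, Finset.mul_sum]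
  refine Finset.sum_congr rfl fun k hk => ?_
  have hk : k ≤ p := by simpa [Nat.lt_succ_iff] using hk
  have hfac : (p.descFactorial (p - k) : ℝ) = p.factorial / k.factorial := by
    rw [eq_div_iff (by positivity), mul_comm]
    have := Nat.factorial_mul_descFactorial (Nat.sub_le p k)
    rw [Nat.sub_sub_self hk] at this
    exact_mod_cast this
  have hD : (D ^ (p - k)) (X ^ p) = C (p.descFactorial (p - k) : ℝ) * X ^ k := by
    rw [Module.End.pow_apply]
    change derivative^[p - k] (X ^ p) = _
    rw [iterate_derivative_X_pow_eq_C_mul, Nat.sub_sub_self hk]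
  have hN (k : ℕ) (f : ℝ[X]) : ((-1 : Module.End ℝ ℝ[X]) ^ k) f = C ((-1) ^ k) * f := by
    induction k with
    | zero => simp
    | succ k ih =>
      rw [pow_succ', Module.End.mul_apply, ih]
      simp [pow_succ]
  rw [Module.End.mul_apply, Module.End.mul_apply, Module.End.natCast_apply, map_nsmul, map_nsmul,
    hD, hN, hfac, nsmul_eq_mul, ← C_eq_natCast, ← mul_assoc, ← mul_assoc, ← mul_assoc, ← C_mul,
    ← C_mul, ← C_mul]
  congr 2
  ring

lemma splits_laguerre (p : ℕ) : (laguerre p).Splits := by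
  have h : ∀ n, ((fun f : ℝ[X] => derivative f - f)^[n] (X ^ p)).Splits := by
    intro n
    induction n with
    | zero => exact Splits.X_pow p
    | succ n ih =>
      rw [Function.iterate_succ_apply']
      exact splits_derivative_sub_self ih
  have hp := h p
  rw [iterate_derivative_sub_self_X_pow] at hp
  have h2 := (Splits.C ((p.factorial : ℝ)⁻¹)).mul hp
  rwa [← mul_assoc, ← C_mul, inv_mul_cancel₀ (by positivity), C_1, one_mul] at h2

lemma laguerre_ode (p : ℕ) :
    X * derivative (derivative (laguerre p)) + (1 - X) * derivative (laguerre p)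
      + C (p : ℝ) * laguerre p = 0 := by
  -- Coefficientwise this is the recurrence `(n + 1)² c (n + 1) = (n - p) c n`.
  have key (n : ℕ) : ((n : ℝ) + 1) ^ 2 * (laguerre p).coeff (n + 1)
      = ((n : ℝ) - p) * (laguerre p).coeff n := by
    rw [coeff_laguerre, coeff_laguerre, Nat.factorial_succ]
    have hc : (p.choose (n + 1) : ℝ) * (n + 1) = p.choose n * (p - n) := by
      rcases le_or_gt n p with h | h
      · have := Nat.choose_succ_right_eq p n
        rw [← Nat.cast_sub h]
        exact_mod_cast this
      · simp [Nat.choose_eq_zero_of_lt h, Nat.choose_eq_zero_of_lt (Nat.lt_succ_of_lt h)]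
    push_cast
    field_simp
    rw [pow_succ]
    linear_combination (-(-1 : ℝ) ^ n) * hc
  ext n
  rw [sub_mul, one_mul, coeff_add, coeff_add, coeff_sub, coeff_C_mul, coeff_derivative]
  cases n with
  | zero =>
    have := key 0
    simp at this ⊢
    linear_combination this
  | succ n =>
    have := key (n + 1)
    simp only [coeff_X_mul, coeff_derivative, coeff_zero]
    push_cast at this ⊢
    linear_combination this

lemma eval_laguerre_pos_of_nonpos (p : ℕ) {x : ℝ} (hx : x ≤ 0) : 0 < (laguerre p).eval x := by
  rw [laguerre, eval_finsetSum, Finset.sum_range_succ']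
  refine add_pos_of_nonneg_of_pos (Finset.sum_nonneg fun k _ => ?_) (by simp)
  have : (-1 : ℝ) ^ (k + 1) * (p.choose (k + 1) : ℝ) / ((k + 1).factorial : ℝ) * x ^ (k + 1)
      = (p.choose (k + 1) : ℝ) / ((k + 1).factorial : ℝ) * (-x) ^ (k + 1) := by
    rw [neg_pow x]
    ring
  rw [eval_mul, eval_C, eval_pow, eval_X, this]
  have : 0 ≤ -x := by linarith
  positivity

lemma rootMultiplicity_laguerre_le_one (p : ℕ) {a : ℝ} (ha : a ≠ 0) :
    (laguerre p).rootMultiplicity a ≤ 1 := by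
  by_contra! hm
  obtain ⟨g, hg, hdvd⟩ :=
    exists_eq_pow_rootMultiplicity_mul_and_not_dvd (laguerre p) (laguerre_ne_zero p) a
  obtain ⟨m, hm⟩ : ∃ m, (laguerre p).rootMultiplicity a = m + 2 := Nat.exists_eq_add_of_le' hm
  have hode := laguerre_ode p
  rw [hm] at hg
  rw [hg] at hode
  -- The equation for `(X - a)^(m + 2) g`, with the common factor `(X - a)^m` pulled out.
  have hfac : (X - C a) ^ m * (X * (C ((m + 2) * (m + 1) : ℝ) * g
      + (X - C a) * (C (2 * (m + 2) : ℝ) * derivative g + (X - C a) * derivative (derivative g)))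
      + (1 - X) * (X - C a) * (C (m + 2 : ℝ) * g + (X - C a) * derivative g)
      + C (p : ℝ) * (X - C a) ^ 2 * g) = 0 := by
    rw [← hode]
    have hC : (C 2 : ℝ[X]) = 2 := map_ofNat C 2
    simp [derivative_mul, derivative_pow, hC]
    ring
  have h0 := (mul_eq_zero.mp hfac).resolve_left (pow_ne_zero _ (X_sub_C_ne_zero a))
  have h1 := congrArg (eval a) h0
  simp at h1
  rcases h1 with h1 | h1 | h1
  · exact ha h1
  · rcases h1 with h1 | h1 <;> norm_cast at h1
  · exact hdvd (dvd_iff_isRoot.mpr h1)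

/-- For `p ≥ 1`, the Laguerre polynomial `L_p` has exactly `p` (real) roots counted with
multiplicity, all of which are simple and strictly positive. -/
theorem laguerre_roots_real_simple_pos (p : ℕ) (hp : 1 ≤ p) :
    Multiset.card (laguerre p).roots = p ∧
      (laguerre p).roots.Nodup ∧
      ∀ x ∈ (laguerre p).roots, (0 : ℝ) < x := by
  have hpos : ∀ x ∈ (laguerre p).roots, (0 : ℝ) < x := by
    intro x hx
    by_contra! h
    exact (eval_laguerre_pos_of_nonpos p h).ne' (isRoot_of_mem_roots hx)
  refine ⟨?_, ?_, hpos⟩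
  · rw [← (splits_laguerre p).natDegree_eq_card_roots, natDegree_laguerre]
  · rw [Multiset.nodup_iff_count_le_one]
    intro a
    by_cases ha : a ∈ (laguerre p).roots
    · rw [count_roots]
      exact rootMultiplicity_laguerre_le_one p (hpos a ha).ne'
    · simp [Multiset.count_eq_zero_of_notMem ha]
end

section
/- Let p ≥ 1 and let ξ_0, …, ξ_{p−1} be the (distinct, strictly positive) roots of the classical Laguerre polynomial L_p. Then the p×p matrix Q with entries Q_{ij} = (−1)^i · √(ξ_j) · L_i(ξ_j) / (p · |L_{p−1}(ξ_j)|), for 0 ≤ i, j ≤ p−1, is an orthogonal matrix, i.e. Qᵀ·Q = I. -/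
/-! The orthogonality is the Christoffel–Darboux formula for the Laguerre polynomials, evaluated at
pairs of roots of `L_p`. The three-term recurrence
`(n+2) L_{n+2} = (2n+3-x) L_{n+1} - (n+1) L_n`, checked coefficientwise, gives by induction

* `(x - y) ∑_{i<n} L_i(x) L_i(y) = n (L_{n-1}(x) L_n(y) - L_n(x) L_{n-1}(y))`, and
* `x ∑_{i<n} L_i(x)² = n² (L_n(x)² + L_{n-1}(x)²) - n (2n - x) L_n(x) L_{n-1}(x)`.

At distinct roots of `L_p` the first makes the columns of `Q` orthogonal; at a single root the
second reads `ξ ∑_{i<p} L_i(ξ)² = p² L_{p-1}(ξ)²`, so the columns have norm one. As `L_0 = 1` and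
`ξ > 0`, this last identity also yields `L_{p-1}(ξ) ≠ 0`. -/

open Polynomial Matrix

/-- The matrix `Q` with entries `Q_{ij} = (-1)^i √(ξ_j) L_i(ξ_j) / (p |L_{p-1}(ξ_j)|)`, built
from the roots `ξ_0, …, ξ_{p-1}` of `L_p`. -/
noncomputable def laguerreQ (p : ℕ) (ξ : Fin p → ℝ) : Matrix (Fin p) (Fin p) ℝ :=
  Matrix.of fun i j =>
    (-1 : ℝ) ^ (i : ℕ) * Real.sqrt (ξ j) * (laguerre (i : ℕ)).eval (ξ j) /
      ((p : ℝ) * |(laguerre (p - 1)).eval (ξ j)|)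

lemma laguerre_coeff (n k : ℕ) :
    (laguerre n).coeff k = (-1 : ℝ) ^ k * (n.choose k : ℝ) / (Nat.factorial k : ℝ) := by
  simp only [laguerre, finsetSum_coeff, coeff_C_mul_X_pow]
  rw [Finset.sum_ite_eq]
  split_ifs with h
  · rfl
  · have : n < k := by simpa [Nat.lt_succ_iff] using h
    simp [Nat.choose_eq_zero_of_lt this]

lemma laguerre_zero : laguerre 0 = 1 := by simp [laguerre]

lemma laguerre_one : laguerre 1 = 1 - X := by
  simp [laguerre, Finset.sum_range_succ, sub_eq_add_neg]

lemma choose_recurrence (n k : ℕ) :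
    ((n : ℝ) + 2) * ((n + 2).choose (k + 1) : ℝ) =
      (2 * n + 3) * ((n + 1).choose (k + 1) : ℝ) + (k + 1) * ((n + 1).choose k : ℝ)
        - (n + 1) * (n.choose (k + 1) : ℝ) := by
  have h1 : ((n + 2).choose (k + 1) : ℝ) = (n + 1).choose k + (n + 1).choose (k + 1) := by
    exact_mod_cast Nat.choose_succ_succ (n + 1) k
  have h2 : ((n + 1).choose (k + 1) : ℝ) = n.choose k + n.choose (k + 1) := by
    exact_mod_cast Nat.choose_succ_succ n k
  have h3 : (n.choose k : ℝ) * (n + 1) = (n + 1).choose k * (n + 1 - k) := by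
    rcases le_or_gt k (n + 1) with h | h
    · have := Nat.choose_mul_succ_eq n k
      rify [h] at this
      exact this
    · simp [Nat.choose_eq_zero_of_lt h, Nat.choose_eq_zero_of_lt (show n < k by omega)]
  rw [h1, h2]
  linear_combination -h3

lemma laguerre_recurrence (n : ℕ) :
    C ((n : ℝ) + 2) * laguerre (n + 2) =
      C (2 * (n : ℝ) + 3) * laguerre (n + 1) - X * laguerre (n + 1)
        - C ((n : ℝ) + 1) * laguerre n := by
  ext k
  cases k with
  | zero =>
    simp only [coeff_sub, coeff_C_mul, coeff_X_mul_zero, laguerre_coeff]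
    simp
    ring
  | succ k =>
    simp only [coeff_sub, coeff_C_mul, coeff_X_mul, laguerre_coeff]
    have hk : (k : ℝ) + 1 ≠ 0 := by positivity
    have hf : (k.factorial : ℝ) ≠ 0 := by positivity
    rw [Nat.factorial_succ]
    push_cast
    field_simp
    linear_combination (-1 : ℝ) ^ (k + 1) * choose_recurrence n k

lemma laguerre_eval_recurrence (n : ℕ) (x : ℝ) :
    ((n : ℝ) + 2) * (laguerre (n + 2)).eval x =
      (2 * n + 3 - x) * (laguerre (n + 1)).eval x - (n + 1) * (laguerre n).eval x := by
  have h := congrArg (eval x) (laguerre_recurrence n)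
  simp only [eval_mul, eval_sub, eval_C, eval_X] at h
  linear_combination h

/-- The Christoffel–Darboux formula. -/
lemma laguerre_christoffel_darboux (n : ℕ) (x y : ℝ) :
    (x - y) * ∑ i ∈ Finset.range (n + 1), (laguerre i).eval x * (laguerre i).eval y =
      (n + 1) * ((laguerre n).eval x * (laguerre (n + 1)).eval y
        - (laguerre (n + 1)).eval x * (laguerre n).eval y) := by
  induction n with
  | zero => simp [laguerre_zero, laguerre_one]
  | succ n ih =>
    rw [Finset.sum_range_succ, mul_add, ih]
    push_cast
    linear_combination (laguerre (n + 1)).eval y * laguerre_eval_recurrence n x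
      - (laguerre (n + 1)).eval x * laguerre_eval_recurrence n y

/-- The confluent Christoffel–Darboux formula multiplied by `x`, with the derivatives eliminated
by `x L_n' = n (L_n - L_{n-1})`. -/
lemma laguerre_christoffel_darboux_diag (n : ℕ) (x : ℝ) :
    x * ∑ i ∈ Finset.range (n + 1), (laguerre i).eval x ^ 2 =
      (n + 1) ^ 2 * ((laguerre (n + 1)).eval x ^ 2 + (laguerre n).eval x ^ 2)
        - (n + 1) * (2 * (n + 1) - x) * ((laguerre (n + 1)).eval x * (laguerre n).eval x) := by
  induction n with
  | zero =>
    simp [laguerre_zero, laguerre_one]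
    ring
  | succ n ih =>
    rw [Finset.sum_range_succ, mul_add, ih]
    push_cast
    have h := laguerre_eval_recurrence n x
    generalize (laguerre (n + 2)).eval x = c at *
    generalize (laguerre (n + 1)).eval x = b at *
    generalize (laguerre n).eval x = a at *
    linear_combination (-(n + 2) * c + b + (n + 1) * a) * h

/-- If `ξ_0, …, ξ_{p-1}` are the distinct, strictly positive roots of the Laguerre polynomial
`L_p`, then the matrix `Q` is orthogonal: `Qᵀ Q = I`. -/
theorem laguerreQ_orthogonal (p : ℕ) (hp : 1 ≤ p) (ξ : Fin p → ℝ)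
    (hinj : Function.Injective ξ)
    (hpos : ∀ j, 0 < ξ j)
    (hroot : ∀ j, (laguerre p).eval (ξ j) = 0) :
    (laguerreQ p ξ)ᵀ * laguerreQ p ξ = 1 := by
  obtain ⟨n, rfl⟩ : ∃ n, p = n + 1 := ⟨p - 1, by omega⟩
  ext j k
  simp only [mul_apply, transpose_apply, laguerreQ, of_apply, Nat.add_sub_cancel]
  -- the signs `(-1)^i` square away, and the factors depending only on the columns come out
  have hfac : ∀ i : Fin (n + 1),
      (-1 : ℝ) ^ (i : ℕ) * √(ξ j) * (laguerre i).eval (ξ j) /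
          (((n + 1 : ℕ) : ℝ) * |(laguerre n).eval (ξ j)|) *
        ((-1 : ℝ) ^ (i : ℕ) * √(ξ k) * (laguerre i).eval (ξ k) /
          (((n + 1 : ℕ) : ℝ) * |(laguerre n).eval (ξ k)|)) =
      √(ξ j) * √(ξ k) / ((((n + 1 : ℕ) : ℝ) * |(laguerre n).eval (ξ j)|) *
          (((n + 1 : ℕ) : ℝ) * |(laguerre n).eval (ξ k)|)) *
        ((laguerre i).eval (ξ j) * (laguerre i).eval (ξ k)) := by
    intro i
    have hs : (-1 : ℝ) ^ (i : ℕ) * (-1 : ℝ) ^ (i : ℕ) = 1 := by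
      rw [← mul_pow]; simp
    rw [div_mul_div_comm, div_mul_eq_mul_div]
    congr 1
    linear_combination √(ξ j) * √(ξ k) * (laguerre i).eval (ξ j) * (laguerre i).eval (ξ k) * hs
  rw [Finset.sum_congr rfl fun i _ => hfac i, ← Finset.mul_sum,
    Fin.sum_univ_eq_sum_range (fun i => (laguerre i).eval (ξ j) * (laguerre i).eval (ξ k))]
  rcases eq_or_ne j k with rfl | hjk
  · have hd := laguerre_christoffel_darboux_diag n (ξ j)
    have hsum : 0 < ∑ i ∈ Finset.range (n + 1), (laguerre i).eval (ξ j) ^ 2 :=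
      Finset.sum_pos' (fun i _ => sq_nonneg _) ⟨0, by simp, by simp [laguerre_zero]⟩
    have hne : (laguerre n).eval (ξ j) ≠ 0 := by
      intro h0
      have := mul_pos (hpos j) hsum
      rw [hd, hroot, h0] at this
      simp at this
    rw [hroot] at hd
    rw [one_apply_eq, Real.mul_self_sqrt (hpos j).le, div_mul_eq_mul_div,
      Finset.sum_congr rfl fun i _ => (pow_two ((laguerre i).eval (ξ j))).symm, hd,
      mul_mul_mul_comm _ |_|, abs_mul_abs_self]
    have hn : (n : ℝ) + 1 ≠ 0 := by positivity
    push_cast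
    field_simp
    ring
  · have hc := laguerre_christoffel_darboux n (ξ j) (ξ k)
    rw [hroot, hroot, mul_zero, zero_mul, sub_zero, mul_zero] at hc
    have hne : ξ j - ξ k ≠ 0 := sub_ne_zero.mpr (hinj.ne hjk)
    rw [(mul_eq_zero.mp hc).resolve_left hne, mul_zero, one_apply_ne hjk]
end

section
/- For every integer p ≥ 1, the matrix T_p is positive definite; in particular T_p is invertible. -/
/-!
The matrix has an explicit `B D Bᴴ` factorization: `D = diag(1, 2, …, p)`, and `B` is the unit
lower bidiagonal matrix with ones on the diagonal and the subdiagonal. Indeed row `i` of `B` is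
`eᵢ + eᵢ₋₁`, so the diagonal entries of the product are `(i + 1) + i` and its off-diagonal entries
are `i + 1`. Since `D` is positive definite and `det B = 1`, so is the congruent matrix.
-/

open Matrix

/-- The `p × p` symmetric tridiagonal Jacobi matrix of the Laguerre three-term recurrence:
diagonal entries `2i + 1`, off-diagonal entries `T_p(i, i+1) = T_p(i+1, i) = i + 1`. -/
def laguerreJacobi (p : ℕ) : Matrix (Fin p) (Fin p) ℝ :=
  Matrix.of fun i j =>
    if (i : ℕ) = (j : ℕ) then 2 * (i : ℕ) + 1
    else if (i : ℕ) + 1 = (j : ℕ) then (i : ℕ) + 1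
    else if (j : ℕ) + 1 = (i : ℕ) then (j : ℕ) + 1
    else 0

/-- The unit lower bidiagonal matrix with ones on the diagonal and the subdiagonal. -/
def laguerreFactor (p : ℕ) : Matrix (Fin p) (Fin p) ℝ :=
  Matrix.of fun i k =>
    (if (k : ℕ) = (i : ℕ) then 1 else 0) + (if (k : ℕ) + 1 = (i : ℕ) then 1 else 0)

lemma laguerreFactor_det (p : ℕ) : (laguerreFactor p).det = 1 := by
  rw [Matrix.det_of_isLowerTriangular]
  · simp [laguerreFactor]
  · intro i j hij
    have h : (i : ℕ) < j := by simpa using hij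
    simp only [laguerreFactor, of_apply]
    rw [if_neg (by omega), if_neg (by omega), add_zero]

lemma laguerreJacobi_eq_factor (p : ℕ) :
    laguerreJacobi p =
      laguerreFactor p * diagonal (fun k : Fin p => ((k : ℕ) : ℝ) + 1) * (laguerreFactor p)ᴴ := by
  ext i j
  rw [mul_apply]
  simp only [mul_diagonal, conjTranspose_apply, star_trivial, laguerreFactor, laguerreJacobi,
    of_apply]
  obtain ⟨i, hi⟩ := i
  obtain ⟨j, hj⟩ := j
  simp only
  rw [Fin.sum_univ_eq_sum_range (fun k : ℕ =>
    (((if k = i then 1 else 0) + (if k + 1 = i then 1 else 0)) * ((k : ℝ) + 1) *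
      ((if k = j then 1 else 0) + (if k + 1 = j then 1 else 0)) : ℝ)) p]
  simp only [add_mul, ite_mul, one_mul, zero_mul, Finset.sum_add_distrib]
  -- The subdiagonal term of row `i` is absent exactly when `i = 0`.
  rcases i with _ | i
  · simp [Finset.sum_ite_eq', hi]
    grind
  · have hi' : i < p := by omega
    simp [Finset.sum_ite_eq', hi, hi']
    grind

/-- For every `p ≥ 1`, the Jacobi matrix `T_p` is positive definite; in particular it is
invertible. -/
theorem laguerreJacobi_posDef (p : ℕ) (hp : 1 ≤ p) :
    (laguerreJacobi p).PosDef ∧ IsUnit (laguerreJacobi p) := by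
  have h : (laguerreJacobi p).PosDef := by
    rw [laguerreJacobi_eq_factor]
    refine (PosDef.diagonal fun k => by positivity).mul_mul_conjTranspose_same ?_
    refine Matrix.vecMul_injective_of_isUnit ?_
    rw [isUnit_iff_isUnit_det, laguerreFactor_det]
    exact isUnit_one
  exact ⟨h, h.isUnit⟩
end
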